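/- Let a > 0, let U ⊂ ℝ³ be an open neighborhood of the sphere ∂B_a = {x ∈ ℝ³ : |x| = a}, and let y : U → ℝ³ be continuously differentiable and injective. Then the 2-dimensional Hausdorff measure of the image of the sphere satisfies H²( y(∂B_a) ) = ∫_{∂B_a} | cof(∇y(x)) ν(x) | dH²(x), where ν(x) = x/a is the outward unit normal. -/

import Mathlib

open Matrix MeasureTheory

/-- The cofactor matrix: transpose of the adjugate. -/
noncomputable def cof (A : Matrix (Fin 3) (Fin 3) ℝ) : Matrix (Fin 3) (Fin 3) ℝ :=
  (Matrix.adjugate A)ᵀ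

/-- The Jacobian matrix `(∇y)_{ij} = ∂y_i/∂x_j` of a map `y : ℝ³ → ℝ³`. -/
noncomputable def jacE (y : EuclideanSpace ℝ (Fin 3) → EuclideanSpace ℝ (Fin 3))
    (x : EuclideanSpace ℝ (Fin 3)) : Matrix (Fin 3) (Fin 3) ℝ :=
  fun i j => fderiv ℝ y x (EuclideanSpace.single j 1) i

/-! Near each of its points a smooth hypersurface `S` is almost its tangent space `T`, and on it
`f` is almost the linear map `f'`. Maps whose increments are almost equally long distort `μH[d]`
almost equally, so on small pieces of `S` the measure of the image is squeezed between multiples of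
`μH[d]` arbitrarily close to the Jacobian of `f'` on `T`. Where `f'` degenerates on `T`, comparison
with the injective map `v ↦ (f' v, δ v)`, `δ → 0`, still gives the upper bound. By Besicovitch's
differentiation theorem the Jacobian is therefore the density of `A ↦ μH[d] (f '' A)`.

For the unit normal `ν` completed to an orthonormal basis by a basis of `T = ν^⊥`, the squared
Jacobian is the minor of the Gram matrix of `f'` complementary to `ν`, that is, a diagonal entry of
an adjugate; multiplicativity of the adjugate turns it into `‖cof f' ν‖²`. -/

open Set Filter Topology Asymptotics Module
open scoped NNReal ENNReal

section Comparison

variable {X Y Z : Type*} {l : Filter X}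

theorem hausdorffMeasure_image_le_of_edist_le [EMetricSpace Y] [MeasurableSpace Y] [BorelSpace Y]
    [EMetricSpace Z] [MeasurableSpace Z] [BorelSpace Z] {f : X → Y} {g : X → Z} {A : Set X}
    {K : ℝ≥0} {d : ℝ} (hd : 0 ≤ d)
    (h : ∀ x ∈ A, ∀ x' ∈ A, edist (f x) (f x') ≤ K * edist (g x) (g x')) :
    μH[d] (f '' A) ≤ (K : ℝ≥0∞) ^ d * μH[d] (g '' A) := by
  rcases A.eq_empty_or_nonempty with rfl | ⟨x₀, -⟩
  · simp
  have : Nonempty X := ⟨x₀⟩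
  let s : Z → X := Function.invFunOn g A
  have hs : ∀ x ∈ A, s (g x) ∈ A ∧ g (s (g x)) = g x := fun x hx =>
    ⟨Function.invFunOn_mem ⟨x, hx, rfl⟩, Function.invFunOn_eq ⟨x, hx, rfl⟩⟩
  have hf : ∀ x ∈ A, f (s (g x)) = f x := fun x hx => by
    simpa [(hs x hx).2] using h _ (hs x hx).1 x hx
  have hlip : LipschitzOnWith K (f ∘ s) (g '' A) := by
    rintro _ ⟨x, hx, rfl⟩ _ ⟨x', hx', rfl⟩
    simpa only [Function.comp_apply, hf x hx, hf x' hx'] using h x hx x' hx'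
  have himage : f '' A = (f ∘ s) '' (g '' A) := by
    rw [image_image]
    exact image_congr fun x hx => (hf x hx).symm
  exact himage ▸ hlip.hausdorffMeasure_image_le hd

theorem eventually_smallSets_hausdorffMeasure_image_le [EMetricSpace Y] [MeasurableSpace Y]
    [BorelSpace Y] [EMetricSpace Z] [MeasurableSpace Z] [BorelSpace Z] {f : X → Y} {g : X → Z}
    {d : ℝ} (hd : 0 ≤ d)
    (h : ∀ c : ℝ≥0, 1 < c →
      ∀ᶠ p in l ×ˢ l, edist (f p.1) (f p.2) ≤ c * edist (g p.1) (g p.2))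
    {K : ℝ≥0∞} (hK : 1 < K) :
    ∀ᶠ A in l.smallSets, μH[d] (f '' A) ≤ K * μH[d] (g '' A) := by
  obtain ⟨c, hcK, hc⟩ : ∃ c : ℝ≥0, (c : ℝ≥0∞) ^ d < K ∧ 1 < c := by
    have hcont : Continuous fun c : ℝ≥0 => (c : ℝ≥0∞) ^ d :=
      ENNReal.continuous_rpow_const.comp ENNReal.continuous_coe
    have hev : ∀ᶠ c : ℝ≥0 in 𝓝[>] 1, (c : ℝ≥0∞) ^ d < K :=
      nhdsWithin_le_nhds ((hcont.tendsto 1).eventually_lt_const (by simpa using hK))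
    exact (hev.and self_mem_nhdsWithin).exists
  obtain ⟨s, hs, hle⟩ := mem_prod_same_iff.1 (h c hc)
  refine eventually_smallSets.2 ⟨s, hs, fun A hA => ?_⟩
  have hAle : ∀ x ∈ A, ∀ x' ∈ A, edist (f x) (f x') ≤ c * edist (g x) (g x') :=
    fun x hx x' hx' => @hle (x, x') ⟨hA hx, hA hx'⟩
  grw [hausdorffMeasure_image_le_of_edist_le hd hAle, hcK]

theorem eventually_smallSets_hausdorffMeasure_image_le_of_isLittleO
    [NormedAddCommGroup Y] [MeasurableSpace Y] [BorelSpace Y]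
    [NormedAddCommGroup Z] [MeasurableSpace Z] [BorelSpace Z]
    {f h : X → Y} {g : X → Z} {d : ℝ} (hd : 0 ≤ d)
    (hfh : (fun p : X × X => (f p.1 - f p.2) - (h p.1 - h p.2)) =o[l ×ˢ l]
      fun p => g p.1 - g p.2)
    (hhg : ∀ x x', ‖h x - h x'‖ ≤ ‖g x - g x'‖) {K : ℝ≥0∞} (hK : 1 < K) :
    ∀ᶠ A in l.smallSets, μH[d] (f '' A) ≤ K * μH[d] (g '' A) := by
  refine eventually_smallSets_hausdorffMeasure_image_le hd (fun c hc => ?_) hK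
  filter_upwards [hfh.bound (sub_pos.2 (NNReal.coe_lt_coe.2 hc))] with p hp
  rw [edist_nndist, edist_nndist, ← ENNReal.coe_mul, ENNReal.coe_le_coe, ← NNReal.coe_le_coe,
    NNReal.coe_mul, coe_nndist, coe_nndist, dist_eq_norm, dist_eq_norm]
  calc ‖f p.1 - f p.2‖
      ≤ ‖h p.1 - h p.2‖ + ‖(f p.1 - f p.2) - (h p.1 - h p.2)‖ := norm_le_norm_add_norm_sub' _ _
    _ ≤ ‖g p.1 - g p.2‖ + (c - 1) * ‖g p.1 - g p.2‖ := add_le_add (hhg _ _) hp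
    _ = c * ‖g p.1 - g p.2‖ := by ring

end Comparison

section NormDet

variable {V W : Type*} [NormedAddCommGroup V] [InnerProductSpace ℝ V]
  [NormedAddCommGroup W] [InnerProductSpace ℝ W]

/-- The perturbation `v ↦ (M v, δ v)` of a linear map `M`: it dominates `M` pointwise, is bounded
below for `δ ≠ 0` even when `M` is degenerate, and its Jacobian tends to that of `M` as `δ → 0`. -/
def prodSMulId (M : V →ₗ[ℝ] W) (δ : ℝ) : V →ₗ[ℝ] WithLp 2 (W × V) :=
  (WithLp.linearEquiv 2 ℝ (W × V)).symm.toLinearMap ∘ₗ M.prod (δ • LinearMap.id)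

theorem norm_apply_le_norm_prodSMulId (M : V →ₗ[ℝ] W) (δ : ℝ) (v : V) :
    ‖M v‖ ≤ ‖prodSMulId M δ v‖ :=
  WithLp.norm_fst_le W (prodSMulId M δ v)

theorem smul_norm_le_norm_prodSMulId (M : V →ₗ[ℝ] W) (δ : ℝ) (v : V) :
    ‖δ • v‖ ≤ ‖prodSMulId M δ v‖ :=
  WithLp.norm_snd_le W (prodSMulId M δ v)

variable [FiniteDimensional ℝ V]

theorem normDet_eq_sqrt_det_gram {ι : Type*} [Fintype ι] [DecidableEq ι] (f : V →ₗ[ℝ] W)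
    (b : OrthonormalBasis ι ℝ V) : f.normDet = √(gram ℝ fun i => f (b i)).det := by
  rw [← f.normDet_sq_eq_det_gram b, RCLike.ofReal_real_eq_id, id,
    Real.sqrt_sq f.normDet_nonneg]

theorem continuous_normDet {X : Type*} [TopologicalSpace X] {F : X → V →ₗ[ℝ] W}
    (hF : ∀ v, Continuous fun x => F x v) : Continuous fun x => (F x).normDet := by
  simp only [normDet_eq_sqrt_det_gram _ (stdOrthonormalBasis ℝ V)]
  exact (Continuous.matrix_det <| continuous_matrix fun i j => (hF _).inner (hF _)).sqrt

theorem tendsto_normDet_prodSMulId (M : V →ₗ[ℝ] W) :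
    Tendsto (fun δ => (prodSMulId M δ).normDet) (𝓝 0) (𝓝 M.normDet) := by
  have hcont : Continuous fun δ => (prodSMulId M δ).normDet :=
    continuous_normDet fun v => (WithLp.prod_continuous_toLp 2 W V).comp <|
      continuous_const.prodMk (continuous_id.smul continuous_const)
  have hzero : (prodSMulId M 0).normDet = M.normDet := by
    simp only [normDet_eq_sqrt_det_gram _ (stdOrthonormalBasis ℝ V)]
    congr 2
    ext i j
    simp [gram_apply, prodSMulId]
  exact hzero ▸ hcont.tendsto 0

end NormDet

section Local

theorem exists_one_lt_mul_lt {a b : ℝ≥0∞} (h : a < b) : ∃ c, 1 < c ∧ c ≠ ∞ ∧ c * a < b := by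
  have hlim : Tendsto (fun c => c * a) (𝓝 1) (𝓝 a) := by
    simpa using ENNReal.Tendsto.mul_const (b := a) tendsto_id (.inl one_ne_zero)
  have hev : ∀ᶠ c in 𝓝[>] 1, c ≠ ∞ ∧ c * a < b := nhdsWithin_le_nhds <|
    (eventually_ne_nhds ENNReal.one_ne_top).and (hlim.eventually_lt_const h)
  exact (eventually_mem_nhdsWithin.and hev).exists

variable {E G : Type*} [NormedAddCommGroup E] [InnerProductSpace ℝ E]
  [NormedAddCommGroup G] [InnerProductSpace ℝ G]

/-- `T` is a strict tangent space to `S` at `x`: differences of points of `S` near `x` lie in `T`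
up to a relatively small error. The orthogonal projection to `T` is then a strict derivative of the
identity along `S`. -/
def HasStrictTangentAt (S : Set E) (T : Submodule ℝ E) [T.HasOrthogonalProjection] (x : E) : Prop :=
  HasFDerivAtFilter id T.starProjection (𝓝[S] x ×ˢ 𝓝[S] x)

variable {S : Set E} {T : Submodule ℝ E} {x : E}

theorem HasStrictTangentAt.isLittleO_sub [T.HasOrthogonalProjection]
    (hT : HasStrictTangentAt S T x) {f : E → G} {f' : E →L[ℝ] G}
    (hf : HasFDerivAtFilter f f' (𝓝[S] x ×ˢ 𝓝[S] x)) :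
    (fun p : E × E => (f p.1 - f p.2) -
        (f' (T.orthogonalProjectionOnto p.1) - f' (T.orthogonalProjectionOnto p.2)))
      =o[𝓝[S] x ×ˢ 𝓝[S] x]
        fun p => T.orthogonalProjectionOnto p.1 - T.orthogonalProjectionOnto p.2 := by
  have hbig : (fun p : E × E => p.1 - p.2) =O[𝓝[S] x ×ˢ 𝓝[S] x]
      fun p => T.starProjection (p.1 - p.2) := by
    simpa only [id, sub_sub_cancel] using (HasFDerivAtFilter.isLittleO hT).right_isBigO_sub
  have hlittle := (hf.comp hT tendsto_id).isLittleO.trans_isBigO hbig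
  refine isLittleO_norm_right.1 ((isLittleO_norm_right.2 hlittle).congr (fun p => ?_) fun p => ?_)
  · simp
  · rw [← map_sub, Submodule.starProjection_apply, Submodule.coe_norm]

variable [FiniteDimensional ℝ T]

/-- The tangential Jacobian: the factor by which `L` scales `finrank ℝ T`-dimensional volume
on `T`. -/
noncomputable def tangentialJacobian (L : E →L[ℝ] G) (T : Submodule ℝ E)
    [FiniteDimensional ℝ T] : ℝ :=
  (L.toLinearMap.domRestrict T).normDet

variable [MeasurableSpace E] [BorelSpace E] [MeasurableSpace G] [BorelSpace G]

theorem HasStrictTangentAt.eventually_hausdorffMeasure_le_projection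
    (hT : HasStrictTangentAt S T x) {d : ℝ} (hd : 0 ≤ d) {K : ℝ≥0∞} (hK : 1 < K) :
    ∀ᶠ A in (𝓝[S] x).smallSets, μH[d] A ≤ K * μH[d] (T.orthogonalProjectionOnto '' A) := by
  have hid : HasFDerivAtFilter id (.id ℝ E) (𝓝[S] x ×ˢ 𝓝[S] x) := .of_isLittleO (by simp)
  simpa only [image_id] using eventually_smallSets_hausdorffMeasure_image_le_of_isLittleO
    (f := id) (h := fun y => (T.orthogonalProjectionOnto y : E)) (g := T.orthogonalProjectionOnto)
    hd (hT.isLittleO_sub hid) (fun _ _ => le_rfl) hK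

theorem HasStrictTangentAt.eventually_hausdorffMeasure_image_le
    (hT : HasStrictTangentAt S T x) {f : E → G} {f' : E →L[ℝ] G}
    (hf : HasFDerivAtFilter f f' (𝓝[S] x ×ˢ 𝓝[S] x)) {K : ℝ≥0∞}
    (hK : ENNReal.ofReal (tangentialJacobian f' T) < K) :
    ∀ᶠ A in (𝓝[S] x).smallSets, μH[finrank ℝ T] (f '' A) ≤ K * μH[finrank ℝ T] A := by
  let P : E →L[ℝ] T := T.orthogonalProjectionOnto
  let M : T →ₗ[ℝ] G := f'.toLinearMap.domRestrict T
  obtain ⟨δ, hδK, hδ⟩ : ∃ δ : ℝ, ENNReal.ofReal (prodSMulId M δ).normDet < K ∧ 0 < δ := by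
    have hlim := ENNReal.tendsto_ofReal (tendsto_normDet_prodSMulId M)
    have hev : ∀ᶠ δ in 𝓝[>] (0 : ℝ), ENNReal.ofReal (prodSMulId M δ).normDet < K :=
      nhdsWithin_le_nhds (hlim.eventually_lt_const hK)
    exact (hev.and eventually_mem_nhdsWithin).exists
  obtain ⟨c, hc, -, hcK⟩ := exists_one_lt_mul_lt hδK
  have hlittle : (fun p : E × E => (f p.1 - f p.2) - (M (P p.1) - M (P p.2)))
      =o[𝓝[S] x ×ˢ 𝓝[S] x] fun p => prodSMulId M δ (P p.1) - prodSMulId M δ (P p.2) := by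
    refine (hT.isLittleO_sub hf).trans_isBigO (.of_bound δ⁻¹ (.of_forall fun p => ?_))
    rw [← map_sub (prodSMulId M δ), le_inv_mul_iff₀ hδ]
    simpa only [norm_smul, Real.norm_of_nonneg hδ.le] using smul_norm_le_norm_prodSMulId M δ _
  have hdom (p q : E) : ‖M (P p) - M (P q)‖ ≤ ‖prodSMulId M δ (P p) - prodSMulId M δ (P q)‖ := by
    simpa only [← map_sub] using norm_apply_le_norm_prodSMulId M δ _
  filter_upwards [eventually_smallSets_hausdorffMeasure_image_le_of_isLittleO (f := f)
    (h := fun p => M (P p)) (g := fun p => prodSMulId M δ (P p)) (Nat.cast_nonneg _)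
    hlittle hdom hc] with A hA
  calc μH[finrank ℝ T] (f '' A)
      ≤ c * μH[finrank ℝ T] ((fun p => prodSMulId M δ (P p)) '' A) := hA
    _ = c * ENNReal.ofReal (prodSMulId M δ).normDet * μH[finrank ℝ T] (P '' A) := by
      rw [← image_image, LinearMap.hausdorffMeasure_image, mul_assoc]
    _ ≤ K * μH[finrank ℝ T] A := by
      grw [hcK, hausdorffMeasure_orthogonalProjectionOnto_le _ _ _ (Nat.cast_nonneg _)]

theorem HasStrictTangentAt.eventually_le_hausdorffMeasure_image
    (hT : HasStrictTangentAt S T x) {f : E → G} {f' : E →L[ℝ] G}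
    (hf : HasFDerivAtFilter f f' (𝓝[S] x ×ˢ 𝓝[S] x)) {k : ℝ≥0∞}
    (hk : k < ENNReal.ofReal (tangentialJacobian f' T)) :
    ∀ᶠ A in (𝓝[S] x).smallSets, k * μH[finrank ℝ T] A ≤ μH[finrank ℝ T] (f '' A) := by
  let P : E →L[ℝ] T := T.orthogonalProjectionOnto
  let M : T →ₗ[ℝ] G := f'.toLinearMap.domRestrict T
  obtain ⟨c, hc, -, hck⟩ := exists_one_lt_mul_lt hk
  obtain ⟨c', hc', hc'_top, hcM⟩ :
      ∃ c', 1 < c' ∧ c' ≠ ∞ ∧ c' * (c * k) < ENNReal.ofReal M.normDet :=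
    exists_one_lt_mul_lt hck
  have hker : M.ker = ⊥ := by
    by_contra h
    simp [LinearMap.normDet_eq_zero_iff_ker_ne_bot.2 h] at hcM
  obtain ⟨C, -, hC⟩ := M.exists_antilipschitzWith hker
  have hsub : (fun p : E × E => (f p.1 - f p.2) - (M (P p.1) - M (P p.2)))
      =o[𝓝[S] x ×ˢ 𝓝[S] x] fun p => P p.1 - P p.2 := hT.isLittleO_sub hf
  have hMP : (fun p : E × E => P p.1 - P p.2)
      =O[𝓝[S] x ×ˢ 𝓝[S] x] fun p => M (P p.1) - M (P p.2) :=
    .of_bound C (.of_forall fun p => by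
      simpa only [dist_eq_norm] using hC.le_mul_dist (P p.1) (P p.2))
  have hlittle : (fun p : E × E => (M (P p.1) - M (P p.2)) - (f p.1 - f p.2))
      =o[𝓝[S] x ×ˢ 𝓝[S] x] fun p => f p.1 - f p.2 := by
    simpa only [neg_sub, sub_add_cancel] using
      (hsub.trans_isBigO (hMP.trans (hsub.trans_isBigO hMP).right_isBigO_add)).neg_left
  filter_upwards [eventually_smallSets_hausdorffMeasure_image_le_of_isLittleO
      (f := fun p => M (P p)) (h := f) (g := f) (Nat.cast_nonneg _) hlittle (fun _ _ => le_rfl) hc',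
    hT.eventually_hausdorffMeasure_le_projection (Nat.cast_nonneg _) hc] with A hfA hPA
  rw [← image_image, LinearMap.hausdorffMeasure_image] at hfA
  refine (ENNReal.mul_le_mul_iff_right (zero_lt_one.trans hc').ne' hc'_top).1 ?_
  calc c' * (k * μH[finrank ℝ T] A) ≤ c' * (k * (c * μH[finrank ℝ T] (P '' A))) := by grw [hPA]
    _ = c' * (c * k) * μH[finrank ℝ T] (P '' A) := by ring
    _ ≤ ENNReal.ofReal M.normDet * μH[finrank ℝ T] (P '' A) := by grw [hcM]
    _ ≤ c' * μH[finrank ℝ T] (f '' A) := hfA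

end Local

section Differentiation

theorem isLocallyFiniteMeasure_of_eventually_le {X : Type*} [TopologicalSpace X] [MeasurableSpace X]
    {ρ μ : Measure X} [IsLocallyFiniteMeasure μ]
    (h : ∀ x, ∃ K : ℝ≥0∞, K ≠ ∞ ∧ ∀ᶠ A in (𝓝 x).smallSets, ρ A ≤ K * μ A) :
    IsLocallyFiniteMeasure ρ := by
  refine ⟨fun x => ?_⟩
  obtain ⟨K, hK, hle⟩ := h x
  obtain ⟨s, hs, hsle⟩ := eventually_smallSets.1 hle
  obtain ⟨t, ht, htμ⟩ := μ.finiteAt_nhds x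
  refine ⟨s ∩ t, inter_mem hs ht, (hsle _ inter_subset_left).trans_lt ?_⟩
  exact ENNReal.mul_lt_top hK.lt_top ((measure_mono inter_subset_right).trans_lt htμ)

theorem absolutelyContinuous_of_eventually_le {X : Type*} [TopologicalSpace X]
    [SecondCountableTopology X] [MeasurableSpace X] {ρ μ : Measure X}
    (h : ∀ x, ∃ K : ℝ≥0∞, ∀ᶠ A in (𝓝 x).smallSets, ρ A ≤ K * μ A) : ρ ≪ μ := by
  intro A hA
  refine measure_null_of_locally_null A fun x _ => ?_
  obtain ⟨K, hK⟩ := h x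
  obtain ⟨s, hs, hsK⟩ := eventually_smallSets.1 hK
  refine ⟨s ∩ A, inter_mem (mem_nhdsWithin_of_mem_nhds hs) self_mem_nhdsWithin, ?_⟩
  have : ρ (s ∩ A) ≤ K * μ (s ∩ A) := hsK _ inter_subset_left
  simpa [measure_mono_null inter_subset_right hA] using this

theorem eq_withDensity_of_eventually_le {X : Type*} [MetricSpace X] [SecondCountableTopology X]
    [HasBesicovitchCovering X] [MeasurableSpace X] [BorelSpace X] {ρ μ : Measure X}
    [IsLocallyFiniteMeasure μ] {F : X → ℝ≥0∞} (hF : ∀ x, F x ≠ ∞)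
    (hupper : ∀ x, ∀ K > F x, ∀ᶠ A in (𝓝 x).smallSets, ρ A ≤ K * μ A)
    (hlower : ∀ x, ∀ k < F x, ∀ᶠ A in (𝓝 x).smallSets, k * μ A ≤ ρ A) :
    ρ = μ.withDensity F := by
  have hbound (x : X) : ∃ K : ℝ≥0∞, K ≠ ∞ ∧ ∀ᶠ A in (𝓝 x).smallSets, ρ A ≤ K * μ A :=
    ⟨F x + 1, by finiteness [hF x], hupper x _ (ENNReal.lt_add_right (hF x) one_ne_zero)⟩
  have : IsLocallyFiniteMeasure ρ := isLocallyFiniteMeasure_of_eventually_le hbound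
  have hac : ρ ≪ μ :=
    absolutelyContinuous_of_eventually_le fun x => (hbound x).imp fun _ => And.right
  rw [← Measure.withDensity_rnDeriv_eq ρ μ hac]
  refine withDensity_congr_ae ?_
  filter_upwards [Besicovitch.ae_tendsto_rnDeriv ρ μ, Measure.support_mem_ae] with x hx hsupp
  have hballs : Tendsto (Metric.closedBall x) (𝓝[>] 0) (𝓝 x).smallSets :=
    (tendsto_closedBall_smallSets x).mono_left nhdsWithin_le_nhds
  refine le_antisymm (le_of_forall_gt_imp_ge_of_dense fun K hK => ?_)
    (le_of_forall_lt_imp_le_of_dense fun k hk => ?_)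
  · refine le_of_tendsto hx ?_
    filter_upwards [hballs.eventually (hupper x K hK)] with r hr
    exact ENNReal.div_le_of_le_mul hr
  · refine ge_of_tendsto hx ?_
    filter_upwards [hballs.eventually (hlower x k hk),
      hballs.eventually (μ.finiteAt_nhds x).eventually, self_mem_nhdsWithin] with r hr hfin hpos
    have hpos' : μ (Metric.closedBall x r) ≠ 0 :=
      (Measure.mem_support_iff_forall x |>.1 hsupp _ (Metric.closedBall_mem_nhds x hpos)).ne'
    exact (ENNReal.le_div_iff_mul_le (.inl hpos') (.inl hfin.ne)).2 hr

theorem tendsto_inter_smallSets_nhdsWithin {X : Type*} [TopologicalSpace X] (S : Set X) (x : X) :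
    Tendsto (· ∩ S) (𝓝 x).smallSets (𝓝[S] x).smallSets := by
  refine tendsto_smallSets_iff.2 fun s hs => ?_
  obtain ⟨u, hu, hus⟩ := mem_nhdsWithin_iff_exists_mem_nhds_inter.1 hs
  exact eventually_smallSets.2 ⟨u, hu, fun A hA => (inter_subset_inter_left S hA).trans hus⟩

theorem measure_image_eq_setLIntegral_of_eventually_le {X Y : Type*} [MetricSpace X]
    [PolishSpace X] [HasBesicovitchCovering X] [MeasurableSpace X] [BorelSpace X]
    [TopologicalSpace Y] [T2Space Y] [MeasurableSpace Y] [BorelSpace Y]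
    {μ : Measure X} {ν : Measure Y} {S : Set X} (hS : IsClosed S)
    [IsLocallyFiniteMeasure (μ.restrict S)] {f : X → Y} (hf : ContinuousOn f S)
    (hinj : InjOn f S) {F : X → ℝ≥0∞} (hF : ∀ x ∈ S, F x ≠ ∞)
    (hupper : ∀ x ∈ S, ∀ K > F x, ∀ᶠ A in (𝓝[S] x).smallSets, ν (f '' A) ≤ K * μ A)
    (hlower : ∀ x ∈ S, ∀ k < F x, ∀ᶠ A in (𝓝[S] x).smallSets, k * μ A ≤ ν (f '' A)) :
    ν (f '' S) = ∫⁻ x in S, F x ∂μ := by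
  let ρ : Measure X := (ν.comap (S.domRestrict f)).map (↑)
  have hρ (A : Set X) : ρ A = ν (f '' (A ∩ S)) := by
    rw [(MeasurableEmbedding.subtype_coe hS.measurableSet).map_apply,
      (hf.measurableEmbedding hS.measurableSet hinj).comap_apply, image_domRestrict]
  have hμ (A : Set X) : μ.restrict S A = μ (A ∩ S) := Measure.restrict_apply' hS.measurableSet
  have hcompl {x : X} (hx : x ∉ S) : ∀ᶠ A in (𝓝 x).smallSets, A ∩ S = ∅ :=
    eventually_smallSets.2 ⟨Sᶜ, hS.isOpen_compl.mem_nhds hx, fun A hA =>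
      disjoint_iff_inter_eq_empty.1 (subset_compl_iff_disjoint_right.1 hA)⟩
  have hdensity : ρ = (μ.restrict S).withDensity (S.indicator F) := by
    refine eq_withDensity_of_eventually_le (fun x => ?_) (fun x K hK => ?_) fun x k hk => ?_
    all_goals by_cases hx : x ∈ S
    · simpa [hx] using hF x hx
    · simp [hx]
    · simp only [hρ, hμ]
      exact (tendsto_inter_smallSets_nhdsWithin S x).eventually
        (hupper x hx K (by simpa [hx] using hK))
    · filter_upwards [hcompl hx] with A hA
      simp [hρ, hA]
    · simp only [hρ, hμ]
      exact (tendsto_inter_smallSets_nhdsWithin S x).eventually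
        (hlower x hx k (by simpa [hx] using hk))
    · filter_upwards [hcompl hx] with A hA
      simp [hμ, hA]
  calc ν (f '' S) = ρ univ := by rw [hρ, univ_inter]
    _ = ∫⁻ x in S, F x ∂μ := by
      rw [hdensity, withDensity_apply _ .univ, Measure.restrict_univ,
        lintegral_indicator hS.measurableSet, Measure.restrict_restrict hS.measurableSet,
        inter_self]

end Differentiation

section AreaFormula

variable {E G : Type*} [NormedAddCommGroup E] [InnerProductSpace ℝ E] [MeasurableSpace E]
  [BorelSpace E] {S : Set E}

theorem HasStrictTangentAt.finiteAtFilter_hausdorffMeasure {T : Submodule ℝ E}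
    [FiniteDimensional ℝ T] {x : E} (hT : HasStrictTangentAt S T x) :
    (μH[finrank ℝ T] : Measure E).FiniteAtFilter (𝓝[S] x) := by
  have hbdd : ∀ᶠ A in (𝓝[S] x).smallSets, A ⊆ Metric.ball x 1 :=
    eventually_smallSets_subset.2 (mem_nhdsWithin_of_mem_nhds (Metric.ball_mem_nhds x one_pos))
  obtain ⟨s, hs, hle⟩ := eventually_smallSets.1
    (hbdd.and (hT.eventually_hausdorffMeasure_le_projection (Nat.cast_nonneg (finrank ℝ T))
      ENNReal.one_lt_two))
  have hproj : Bornology.IsBounded (T.orthogonalProjectionOnto '' s) :=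
    T.lipschitzWith_orthogonalProjectionOnto.isBounded_image
      (Metric.isBounded_ball.subset (hle s Subset.rfl).1)
  exact ⟨s, hs, (hle s Subset.rfl).2.trans_lt
    (ENNReal.mul_lt_top ENNReal.ofNat_lt_top hproj.measure_lt_top)⟩

theorem isLocallyFiniteMeasure_hausdorffMeasure_restrict (hS : IsClosed S)
    {T : E → Submodule ℝ E} [∀ x, FiniteDimensional ℝ (T x)]
    (hT : ∀ x ∈ S, HasStrictTangentAt S (T x) x) {d : ℕ} (hd : ∀ x ∈ S, finrank ℝ (T x) = d) :
    IsLocallyFiniteMeasure ((μH[d] : Measure E).restrict S) := by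
  refine ⟨fun x => ?_⟩
  by_cases hx : x ∈ S
  · obtain ⟨s, hs, hfin⟩ := hd x hx ▸ (hT x hx).finiteAtFilter_hausdorffMeasure
    obtain ⟨u, hu, hus⟩ := mem_nhdsWithin_iff_exists_mem_nhds_inter.1 hs
    refine ⟨u, hu, ?_⟩
    rw [Measure.restrict_apply' hS.measurableSet]
    exact (measure_mono hus).trans_lt hfin
  · exact ⟨Sᶜ, hS.isOpen_compl.mem_nhds hx, by simp [Measure.restrict_apply' hS.measurableSet]⟩

variable [FiniteDimensional ℝ E] [NormedAddCommGroup G] [InnerProductSpace ℝ G]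
  [MeasurableSpace G] [BorelSpace G]

theorem hausdorffMeasure_image_eq_setLIntegral_tangentialJacobian (hS : IsClosed S)
    {T : E → Submodule ℝ E} (hT : ∀ x ∈ S, HasStrictTangentAt S (T x) x)
    {d : ℕ} (hd : ∀ x ∈ S, finrank ℝ (T x) = d) {f : E → G} {f' : E → E →L[ℝ] G}
    (hf : ∀ x ∈ S, HasFDerivAtFilter f (f' x) (𝓝[S] x ×ˢ 𝓝[S] x)) (hinj : InjOn f S) :
    μH[d] (f '' S) = ∫⁻ x in S, ENNReal.ofReal (tangentialJacobian (f' x) (T x)) ∂μH[d] := by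
  have := isLocallyFiniteMeasure_hausdorffMeasure_restrict hS hT hd
  have hcont : ContinuousOn f S := fun x hx => HasFDerivWithinAt.continuousWithinAt <|
    (hf x hx).mono (Filter.prod_mono_right _ (pure_le_nhdsWithin hx))
  refine measure_image_eq_setLIntegral_of_eventually_le hS hcont hinj
    (fun _ _ => ENNReal.ofReal_ne_top) (fun x hx K hK => ?_) fun x hx k hk => ?_
  · exact hd x hx ▸ (hT x hx).eventually_hausdorffMeasure_image_le (hf x hx) hK
  · exact hd x hx ▸ (hT x hx).eventually_le_hausdorffMeasure_image (hf x hx) hk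

end AreaFormula

section Cofactor

variable {ι : Type*} [Fintype ι] [DecidableEq ι]

theorem adjugate_eq_det_smul_transpose {R : Type*} [CommRing R] {Q : Matrix ι ι R}
    (hQ : Qᵀ * Q = 1) : adjugate Q = Q.det • Qᵀ := by
  calc adjugate Q = Qᵀ * Q * adjugate Q := by rw [hQ, Matrix.one_mul]
    _ = Q.det • Qᵀ := by rw [Matrix.mul_assoc, mul_adjugate, Matrix.mul_smul, Matrix.mul_one]

theorem adjugate_transpose_mul_self_apply_self {R : Type*} [CommRing R] (A : Matrix ι ι R)
    {Q : Matrix ι ι R} (hQ : Qᵀ * Q = 1) (i : ι) :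
    adjugate ((A * Q)ᵀ * (A * Q)) i i = ∑ k, (((adjugate A)ᵀ *ᵥ Q.col i) k) ^ 2 := by
  have hdet : Q.det * Q.det = 1 := by simpa using congrArg det hQ
  have hadj : adjugate ((A * Q)ᵀ * (A * Q)) = Qᵀ * adjugate A * (Qᵀ * adjugate A)ᵀ := by
    rw [adjugate_mul_distrib, ← adjugate_transpose, adjugate_mul_distrib,
      adjugate_eq_det_smul_transpose hQ, Matrix.smul_mul, transpose_smul, Matrix.smul_mul,
      Matrix.mul_smul, smul_smul, hdet, one_smul]
  have hrow (k : ι) : (Qᵀ * adjugate A) i k = ((adjugate A)ᵀ *ᵥ Q.col i) k := by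
    simp [mul_apply, mulVec, dotProduct, mul_comm]
  simp only [hadj, mul_apply (M := Qᵀ * adjugate A), transpose_apply, hrow, sq]

variable {E G : Type*} [NormedAddCommGroup E] [InnerProductSpace ℝ E]
  [NormedAddCommGroup G] [InnerProductSpace ℝ G]

theorem gram_map_eq_transpose_mul_self {κ m : Type*} [Fintype κ]
    (e : OrthonormalBasis ι ℝ E) (e' : OrthonormalBasis κ ℝ G) (L : E →ₗ[ℝ] G) (v : m → E) :
    gram ℝ (fun i => L (v i)) =
      (LinearMap.toMatrix e.toBasis e'.toBasis L * e.toBasis.toMatrix v)ᵀ *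
        (LinearMap.toMatrix e.toBasis e'.toBasis L * e.toBasis.toMatrix v) := by
  have hcoord : (of fun i j => e'.repr (L (v j)) i) =
      LinearMap.toMatrix e.toBasis e'.toBasis L * e.toBasis.toMatrix v := by
    ext i j
    exact (congrFun (LinearMap.toMatrix_mulVec_repr e.toBasis e'.toBasis L (v j)) i).symm
  rw [gram_eq_conjTranspose_mul e', conjTranspose_eq_transpose_of_trivial, hcoord]

theorem det_gram_vecTail {n : ℕ} (w : Fin (n + 1) → G) :
    (gram ℝ (vecTail w)).det = adjugate (gram ℝ w) 0 0 := by
  simp only [adjugate_fin_succ_eq_det_submatrix, Fin.succAbove_zero, Fin.val_zero, add_zero,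
    pow_zero, one_mul]
  rfl

theorem tangentialJacobian_orthogonal_span_singleton [FiniteDimensional ℝ E] {n : ℕ}
    (e : OrthonormalBasis (Fin (n + 1)) ℝ E) (e' : OrthonormalBasis (Fin (n + 1)) ℝ G)
    (L : E →L[ℝ] G) {ν : E} (hν : ‖ν‖ = 1) :
    tangentialJacobian L (ℝ ∙ ν)ᗮ =
      ‖WithLp.toLp 2 ((adjugate (LinearMap.toMatrix e.toBasis e'.toBasis L))ᵀ *ᵥ e.repr ν)‖ := by
  let A := LinearMap.toMatrix e.toBasis e'.toBasis (L : E →ₗ[ℝ] G)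
  have : Fact (finrank ℝ E = n + 1) := ⟨by simpa using finrank_eq_card_basis e.toBasis⟩
  have hrank : finrank ℝ (ℝ ∙ ν)ᗮ = n :=
    Submodule.finrank_orthogonal_span_singleton (norm_ne_zero_iff.1 (hν ▸ one_ne_zero))
  let u : OrthonormalBasis (Fin n) ℝ (ℝ ∙ ν)ᗮ := (stdOrthonormalBasis ℝ _).reindex (finCongr hrank)
  let v : Fin (n + 1) → E := vecCons ν fun i => u i
  have hv : Orthonormal ℝ v := orthonormal_vecCons_iff.2 ⟨hν,
    fun i => Submodule.mem_orthogonal_singleton_iff_inner_right.1 (u i).2,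
    u.orthonormal.comp_linearIsometry (Submodule.subtypeₗᵢ _)⟩
  have hQ : (e.toBasis.toMatrix v)ᵀ * e.toBasis.toMatrix v = 1 :=
    (gram_eq_conjTranspose_mul e v).symm.trans (gram_eq_one_iff_orthonormal.2 hv)
  calc tangentialJacobian L (ℝ ∙ ν)ᗮ = √(gram ℝ fun i => L (u i)).det :=
        normDet_eq_sqrt_det_gram _ u
    _ = √(adjugate (gram ℝ fun i => (L : E →ₗ[ℝ] G) (v i)) 0 0) :=
        congrArg Real.sqrt (det_gram_vecTail fun i => L (v i))
    _ = √(∑ k, ((A.adjugateᵀ *ᵥ (e.toBasis.toMatrix v).col 0) k) ^ 2) := by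
        rw [gram_map_eq_transpose_mul_self e e', adjugate_transpose_mul_self_apply_self _ hQ]
    _ = ‖WithLp.toLp 2 (A.adjugateᵀ *ᵥ e.repr ν)‖ := by
        simp only [EuclideanSpace.norm_eq, Real.norm_eq_abs, sq_abs]
        rfl

end Cofactor

section Sphere

variable {E : Type*} [NormedAddCommGroup E] [InnerProductSpace ℝ E]

theorem hasFDerivAtFilter_nhdsWithin_prod_self {G : Type*} [NormedAddCommGroup G] [NormedSpace ℝ G]
    {f : E → G} {f' : E →L[ℝ] G} {x : E} (hf : HasStrictFDerivAt f f' x) (S : Set E) :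
    HasFDerivAtFilter f f' (𝓝[S] x ×ˢ 𝓝[S] x) :=
  hf.mono ((nhdsWithin_prod_eq x x S S).symm.trans_le nhdsWithin_le_nhds)

theorem hasStrictTangentAt_orthogonal_of_hasStrictFDerivAt {φ : E → ℝ} {S : Set E} {r : ℝ} {x v : E}
    (hφ : HasStrictFDerivAt φ (innerSL ℝ v) x) (hS : ∀ y ∈ S, φ y = r) :
    HasStrictTangentAt S (ℝ ∙ v)ᗮ x := by
  have hconst : ∀ᶠ p in 𝓝[S] x ×ˢ 𝓝[S] x, φ p.1 - φ p.2 = 0 :=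
    (eventually_mem_nhdsWithin.prod_mk eventually_mem_nhdsWithin).mono fun p hp => by
      rw [hS _ hp.1, hS _ hp.2, sub_self]
  have hnormal : (fun p : E × E => innerSL ℝ v (p.1 - p.2)) =o[𝓝[S] x ×ˢ 𝓝[S] x]
      fun p => p.1 - p.2 :=
    (hasFDerivAtFilter_nhdsWithin_prod_self hφ S).isLittleO.neg_left.congr'
      (hconst.mono fun p hp => by simp [hp]) .rfl
  refine .of_isLittleO <| (((ContinuousLinearMap.toSpanSingleton ℝ v).isBigO_comp _ _)
    |>.trans_isLittleO (hnormal.const_mul_left (‖v‖ ^ 2)⁻¹)).congr_left fun p => ?_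
  rw [id, id, Submodule.starProjection_orthogonal_val, Submodule.starProjection_singleton,
    sub_sub_cancel, ContinuousLinearMap.toSpanSingleton_apply, innerSL_apply_apply, div_eq_inv_mul]
  rfl

theorem hasStrictTangentAt_sphere (c x : E) (a : ℝ) :
    HasStrictTangentAt (Metric.sphere c a) (ℝ ∙ (x - c))ᗮ x := by
  have hderiv : HasStrictFDerivAt (fun y => ‖y - c‖ ^ 2 / 2) (innerSL ℝ (x - c)) x := by
    have := ((hasStrictFDerivAt_norm_sq (x - c)).comp x
      ((hasStrictFDerivAt_id x).sub_const c)).const_smul (2⁻¹ : ℝ)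
    convert! this using 1
    · ext y; simp [div_eq_inv_mul]
    · ext y; simp
  exact hasStrictTangentAt_orthogonal_of_hasStrictFDerivAt hderiv (r := a ^ 2 / 2) fun y hy => by
    rw [mem_sphere_iff_norm.1 hy]

end Sphere

section Main

variable {E G : Type*} [NormedAddCommGroup E] [InnerProductSpace ℝ E] [MeasurableSpace E]
  [BorelSpace E] [NormedAddCommGroup G] [InnerProductSpace ℝ G] [MeasurableSpace G] [BorelSpace G]
  {n : ℕ}

theorem hausdorff_measure_image_sphere_general (e : OrthonormalBasis (Fin (n + 1)) ℝ E)
    (e' : OrthonormalBasis (Fin (n + 1)) ℝ G) {c : E} {a : ℝ} (ha : 0 < a) {y : E → G}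
    {y' : E → E →L[ℝ] G} (hy : ∀ x ∈ Metric.sphere c a, HasStrictFDerivAt y (y' x) x)
    (hinj : InjOn y (Metric.sphere c a)) :
    μH[n] (y '' Metric.sphere c a) = ∫⁻ x in Metric.sphere c a,
      ENNReal.ofReal ‖WithLp.toLp 2
        ((adjugate (LinearMap.toMatrix e.toBasis e'.toBasis (y' x)))ᵀ *ᵥ
          e.repr (a⁻¹ • (x - c)))‖ ∂μH[n] := by
  have : FiniteDimensional ℝ E := e.toBasis.finiteDimensional_of_finite
  have : Fact (finrank ℝ E = n + 1) := ⟨by simpa using finrank_eq_card_basis e.toBasis⟩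
  have hne (x : E) (hx : x ∈ Metric.sphere c a) : x - c ≠ 0 :=
    sub_ne_zero.2 (Metric.ne_of_mem_sphere hx ha.ne')
  have hunit (x : E) (hx : x ∈ Metric.sphere c a) : ‖a⁻¹ • (x - c)‖ = 1 := by
    rw [norm_smul, mem_sphere_iff_norm.1 hx, norm_inv, Real.norm_of_nonneg ha.le,
      inv_mul_cancel₀ ha.ne']
  have hspan (x : E) : (ℝ ∙ (a⁻¹ • (x - c))) = ℝ ∙ (x - c) :=
    Submodule.span_singleton_smul_eq (IsUnit.mk0 _ (inv_ne_zero ha.ne')) _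
  rw [hausdorffMeasure_image_eq_setLIntegral_tangentialJacobian Metric.isClosed_sphere
    (fun x _ => hasStrictTangentAt_sphere c x a)
    (fun x hx => Submodule.finrank_orthogonal_span_singleton (hne x hx))
    (fun x hx => hasFDerivAtFilter_nhdsWithin_prod_self (hy x hx) _) hinj]
  refine setLIntegral_congr_fun Metric.isClosed_sphere.measurableSet fun x hx => ?_
  simp only [← tangentialJacobian_orthogonal_span_singleton e e' (y' x) (hunit x hx), hspan]

end Main

theorem toMatrix_basisFun_fderiv (y : EuclideanSpace ℝ (Fin 3) → EuclideanSpace ℝ (Fin 3))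
    (x : EuclideanSpace ℝ (Fin 3)) :
    LinearMap.toMatrix (EuclideanSpace.basisFun (Fin 3) ℝ).toBasis
      (EuclideanSpace.basisFun (Fin 3) ℝ).toBasis (fderiv ℝ y x) = jacE y x := by
  ext i j
  simp [LinearMap.toMatrix_apply, jacE]

/-- Area formula for the image of the sphere `∂B_a` under an injective C¹ map:
`H²(y(∂B_a)) = ∫_{∂B_a} |cof(∇y) ν| dH²` with `ν(x) = x/a`. -/
theorem hausdorff_measure_image_sphere
    (a : ℝ) (ha : 0 < a)
    (U : Set (EuclideanSpace ℝ (Fin 3))) (hU : IsOpen U)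
    (hsub : Metric.sphere (0 : EuclideanSpace ℝ (Fin 3)) a ⊆ U)
    (y : EuclideanSpace ℝ (Fin 3) → EuclideanSpace ℝ (Fin 3))
    (hy : ContDiffOn ℝ 1 y U) (hinj : Set.InjOn y U) :
    μH[2] (y '' Metric.sphere (0 : EuclideanSpace ℝ (Fin 3)) a)
      = ∫⁻ x in Metric.sphere (0 : EuclideanSpace ℝ (Fin 3)) a,
          ENNReal.ofReal
            (Real.sqrt (∑ i, ((cof (jacE y x)).mulVec (fun j => x j / a) i)^2))
          ∂(μH[2]) := by
  have hderiv : ∀ x ∈ Metric.sphere 0 a, HasStrictFDerivAt y (fderiv ℝ y x) x := fun x hx =>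
    (hy.contDiffAt (hU.mem_nhds (hsub hx))).hasStrictFDerivAt one_ne_zero
  have hnormal (x : EuclideanSpace ℝ (Fin 3)) :
      ⇑((EuclideanSpace.basisFun (Fin 3) ℝ).repr (a⁻¹ • (x - 0))) = fun j => x j / a := by
    ext j
    simp [div_eq_inv_mul]
  have harea := hausdorff_measure_image_sphere_general (EuclideanSpace.basisFun (Fin 3) ℝ)
    (EuclideanSpace.basisFun (Fin 3) ℝ) ha hderiv (hinj.mono hsub)
  simpa only [← toMatrix_basisFun_fderiv, hnormal, EuclideanSpace.norm_eq, Real.norm_eq_abs, sq_abs,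
    Nat.cast_ofNat, cof] using harea
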